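/- Trade-off constraint for the D-CPPG: let m ≥ n and k be positive integers and let T ≥ 2 be an integer. Suppose F(1), …, F(T) are points of ℤ² such that every integer point (x,y) with 0 ≤ x ≤ n and 0 ≤ y ≤ m is within l1 distance k of some F(i), and let L = ∑_{i=1}^{T−1} dist₁(F(i), F(i+1)). Then (T−1)·f_LB-D(L/(T−1)) ≥ (m+1)(n+1) − (2k² + 2k + 1). -/

import Mathlib

/-!
Write `B p` for the closed `l1` ball of radius `k` around `p`; it has `2k² + 2k + 1` lattice points.
Moving from `p` to `q` with `distZ p q = d`, the number of newly covered points is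
`|B q \ B p| = |B q| - |B p ∩ B q|`, and the intersection is bounded below through midpoints:

* if `d` is even, `B p ∩ B q` contains the ball of radius `k - d/2` around a midpoint of `p`, `q`;
* if `d` is odd, it contains the two balls of radius `k - (d+1)/2` around two adjacent points in the
  middle of a geodesic from `p` to `q`.

All counting uses the tilted `s × s` squares `diamond c s`: a ball of radius `r` is the disjoint
union of the diamonds of sides `r + 1` and `r` around its centre, and diamonds whose centres and
sides have suitable parity are disjoint. This gives `|B q \ B p| ≤ fLBDnat k d` (`card_new_le`), so
the number of covered points is at most `2k² + 2k + 1` plus the sum of the values of `fLBDnat k` at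
the step lengths. Finally `fLBDnat k` is concave on the integers, in the form that it lies below
each of its chords over consecutive integers, extended to a line (`fLBDnat_le_line`); summing the
line through the chord that contains the average step length gives the claim.
-/

open Finset

/-- l1 distance on ℤ². -/
def distZ (p q : ℤ × ℤ) : ℤ := |p.1 - q.1| + |p.2 - q.2|

/-- The values of `f_LB-D` at natural number arguments:
`d(2k+1−d/2) + 1/2` for odd `d ≤ 2k`, `d(2k+1−d/2)` for even `d ≤ 2k`
(in particular `0` at `d = 0`), and `2k² + 2k + 1` for `d ≥ 2k+1`. -/
noncomputable def fLBDnat (k d : ℕ) : ℝ :=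
  if 2 * k + 1 ≤ d then 2 * (k : ℝ) ^ 2 + 2 * (k : ℝ) + 1
  else if Odd d then (d : ℝ) * (2 * (k : ℝ) + 1 - (d : ℝ) / 2) + 1 / 2
  else (d : ℝ) * (2 * (k : ℝ) + 1 - (d : ℝ) / 2)

/-- The piecewise-linear lower-bound function `f_LB-D` for the D-CPPG: it takes the
values `fLBDnat` at integer arguments, equals `2k² + 2k + 1` for `d ≥ 2k+1`, and
interpolates linearly between consecutive integers. -/
noncomputable def fLBD (k : ℕ) (d : ℝ) : ℝ :=
  if 2 * (k : ℝ) + 1 ≤ d then 2 * (k : ℝ) ^ 2 + 2 * (k : ℝ) + 1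
  else ((⌊d⌋ : ℝ) + 1 - d) * fLBDnat k ⌊d⌋.toNat +
       (d - (⌊d⌋ : ℝ)) * fLBDnat k (⌊d⌋.toNat + 1)

/-! ### Balls and tilted squares in the lattice -/

/-- The lattice points at `l1` distance at most `k` from `c`. -/
noncomputable def ballZ (c : ℤ × ℤ) (k : ℕ) : Finset (ℤ × ℤ) :=
  (Icc (c.1 - k) (c.1 + k) ×ˢ Icc (c.2 - k) (c.2 + k)).filter fun z => distZ z c ≤ k

/-- The tilted square of `s × s` lattice points centred at `c`, all of the same parity. -/
def diamond (c : ℤ × ℤ) (s : ℕ) : Finset (ℤ × ℤ) :=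
  (range s ×ˢ range s).image fun p : ℕ × ℕ =>
    (c.1 + ((p.1 : ℤ) + p.2 - (s - 1)), c.2 + ((p.1 : ℤ) - p.2))

theorem mem_ballZ {c z : ℤ × ℤ} {k : ℕ} : z ∈ ballZ c k ↔ distZ z c ≤ k := by
  rw [ballZ, mem_filter, mem_product, mem_Icc, mem_Icc, and_iff_right_iff_imp]
  intro h
  rw [distZ] at h
  have h1 := abs_nonneg (z.1 - c.1)
  have h2 := abs_nonneg (z.2 - c.2)
  have h3 := abs_le.mp (show |z.1 - c.1| ≤ k by linarith)
  have h4 := abs_le.mp (show |z.2 - c.2| ≤ k by linarith)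
  omega

theorem mem_diamond {c z : ℤ × ℤ} {s : ℕ} : z ∈ diamond c s ↔ ∃ i j : ℕ, i < s ∧ j < s ∧
    z.1 = c.1 + ((i : ℤ) + j - (s - 1)) ∧ z.2 = c.2 + ((i : ℤ) - j) := by
  simp only [diamond, mem_image, mem_product, mem_range, Prod.exists, Prod.ext_iff]
  constructor
  · rintro ⟨i, j, ⟨hi, hj⟩, h1, h2⟩
    exact ⟨i, j, hi, hj, h1.symm, h2.symm⟩
  · rintro ⟨i, j, hi, hj, h1, h2⟩
    exact ⟨i, j, ⟨hi, hj⟩, h1.symm, h2.symm⟩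

theorem card_diamond (c : ℤ × ℤ) (s : ℕ) : #(diamond c s) = s * s := by
  rw [diamond, card_image_of_injective, card_product, card_range]
  rintro ⟨i, j⟩ ⟨i', j'⟩ h
  simp only [Prod.mk.injEq] at h ⊢
  omega

theorem diamond_subset_ballZ {c : ℤ × ℤ} {s r : ℕ} (h : s ≤ r + 1) :
    diamond c s ⊆ ballZ c r := by
  intro z hz
  obtain ⟨i, j, hi, hj, h1, h2⟩ := mem_diamond.mp hz
  rw [mem_ballZ, distZ]
  rcases abs_cases (z.1 - c.1) with h3 | h3 <;> rcases abs_cases (z.2 - c.2) with h4 | h4 <;> omega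

theorem ballZ_subset (c : ℤ × ℤ) (r : ℕ) :
    ballZ c r ⊆ diamond c (r + 1) ∪ diamond c r := by
  intro z hz
  rw [mem_ballZ, distZ] at hz
  rw [mem_union, mem_diamond, mem_diamond]
  -- The parity of `z - c` decides which of the two tilted squares contains `z`.
  rcases Int.even_or_odd' (z.1 - c.1 + (z.2 - c.2) + r) with ⟨t, ht | ht⟩
  · left
    refine ⟨t.toNat, (t - (z.2 - c.2)).toNat, ?_⟩
    rcases abs_cases (z.1 - c.1) with h3 | h3 <;> rcases abs_cases (z.2 - c.2) with h4 | h4 <;>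
      refine ⟨?_, ?_, ?_, ?_⟩ <;> push_cast <;> omega
  · right
    refine ⟨t.toNat, (t - (z.2 - c.2)).toNat, ?_⟩
    rcases abs_cases (z.1 - c.1) with h3 | h3 <;> rcases abs_cases (z.2 - c.2) with h4 | h4 <;>
      refine ⟨?_, ?_, ?_, ?_⟩ <;> omega

theorem card_ballZ_le (c : ℤ × ℤ) (r : ℕ) : #(ballZ c r) ≤ (r + 1) * (r + 1) + r * r := by
  refine (card_le_card (ballZ_subset c r)).trans ((card_union_le _ _).trans ?_)
  rw [card_diamond, card_diamond]

theorem diamond_disjoint {c c' : ℤ × ℤ} {s s' : ℕ}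
    (h : Odd (c.1 + c.2 + s + (c'.1 + c'.2 + s'))) : Disjoint (diamond c s) (diamond c' s') := by
  rw [Finset.disjoint_left]
  intro z hz hz'
  obtain ⟨i, j, -, -, h1, h2⟩ := mem_diamond.mp hz
  obtain ⟨i', j', -, -, h1', h2'⟩ := mem_diamond.mp hz'
  obtain ⟨t, ht⟩ := h
  omega

/-! ### Intersections of two balls -/

/-- A geodesic from `p` to `q` passes through a lattice point at every intermediate distance. -/
theorem exists_distZ_eq (p q : ℤ × ℤ) (j l : ℕ) (h : distZ p q = j + l) :
    ∃ c : ℤ × ℤ, distZ p c = j ∧ distZ c q = l := by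
  simp only [distZ] at h ⊢
  -- Move first along the first coordinate, as far as possible, then along the second one.
  by_cases hj : (j : ℤ) ≤ |p.1 - q.1|
  · rcases le_total p.1 q.1 with h1 | h1
    · refine ⟨(p.1 + j, p.2), ?_⟩
      rw [abs_of_nonpos (by omega : p.1 - q.1 ≤ 0)] at h hj
      simp only [sub_self, abs_zero]
      rw [abs_of_nonpos (by omega), abs_of_nonpos (by omega : p.1 + j - q.1 ≤ 0)]
      constructor <;> linarith
    · refine ⟨(p.1 - j, p.2), ?_⟩
      rw [abs_of_nonneg (by omega : 0 ≤ p.1 - q.1)] at h hj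
      simp only [sub_self, abs_zero]
      rw [abs_of_nonneg (by omega), abs_of_nonneg (by omega : 0 ≤ p.1 - j - q.1)]
      constructor <;> linarith
  · rcases le_total p.2 q.2 with h1 | h1
    · refine ⟨(q.1, q.2 - l), ?_⟩
      rw [abs_of_nonpos (by omega : p.2 - q.2 ≤ 0)] at h
      simp only [sub_self, abs_zero]
      rw [abs_of_nonpos (by omega : p.2 - (q.2 - l) ≤ 0),
        abs_of_nonpos (by omega : q.2 - l - q.2 ≤ 0)]
      constructor <;> linarith
    · refine ⟨(q.1, q.2 + l), ?_⟩
      rw [abs_of_nonneg (by omega : 0 ≤ p.2 - q.2)] at h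
      simp only [sub_self, abs_zero]
      rw [abs_of_nonneg (by omega : 0 ≤ p.2 - (q.2 + l)),
        abs_of_nonneg (by omega : 0 ≤ q.2 + l - q.2)]
      constructor <;> linarith

theorem distZ_triangle (a b c : ℤ × ℤ) : distZ a c ≤ distZ a b + distZ b c := by
  simp only [distZ]
  linarith [abs_sub_le a.1 b.1 c.1, abs_sub_le a.2 b.2 c.2]

theorem distZ_comm (a b : ℤ × ℤ) : distZ a b = distZ b a := by
  simp only [distZ, abs_sub_comm]

theorem distZ_nonneg (a b : ℤ × ℤ) : 0 ≤ distZ a b := by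
  unfold distZ; positivity

theorem ballZ_subset_ballZ {c p : ℤ × ℤ} {r k : ℕ} (h : distZ c p + r ≤ k) :
    ballZ c r ⊆ ballZ p k := by
  intro z hz
  rw [mem_ballZ] at hz ⊢
  linarith [distZ_triangle z c p]

theorem inter_even {p q : ℤ × ℤ} {j r : ℕ} (h : distZ p q = j + j) :
    (r + 1) * (r + 1) + r * r ≤ #(ballZ q (r + j) ∩ ballZ p (r + j)) := by
  obtain ⟨c, h1, h2⟩ := exists_distZ_eq p q j j h
  rw [distZ_comm] at h1
  rw [← card_diamond c (r + 1), ← card_diamond c r, ← card_union_of_disjoint]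
  · refine card_le_card (union_subset ?_ ?_) <;>
    refine (diamond_subset_ballZ (r := r) (by omega)).trans (subset_inter ?_ ?_) <;>
    exact ballZ_subset_ballZ (by push_cast; omega)
  · exact diamond_disjoint ⟨c.1 + c.2 + r, by push_cast; ring⟩

theorem inter_odd {p q : ℤ × ℤ} {j r : ℕ} (h : distZ p q = j + (j + 1)) :
    2 * ((r + 1) * (r + 1)) ≤ #(ballZ q (r + j + 1) ∩ ballZ p (r + j + 1)) := by
  obtain ⟨c, h1, h2⟩ := exists_distZ_eq p q j (j + 1) (by push_cast; exact h)
  obtain ⟨c', h3, h4⟩ := exists_distZ_eq c q 1 j (by rw [h2]; push_cast; ring)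
  have h5 := distZ_triangle p c c'
  rw [distZ_comm p] at h5 h1
  rw [distZ_comm p] at h5
  have hodd : Odd (c.1 + c.2 + (c'.1 + c'.2)) := by
    simp only [distZ] at h3
    rw [Int.odd_iff]
    rcases abs_cases (c.1 - c'.1) with h6 | h6 <;>
      rcases abs_cases (c.2 - c'.2) with h7 | h7 <;> omega
  obtain ⟨t, ht⟩ := hodd
  calc 2 * ((r + 1) * (r + 1)) = #(diamond c (r + 1) ∪ diamond c' (r + 1)) := by
        rw [card_union_of_disjoint, card_diamond, card_diamond, two_mul]
        exact diamond_disjoint ⟨t + r + 1, by push_cast; linarith⟩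
    _ ≤ _ := by
      refine card_le_card (union_subset ?_ ?_) <;>
      refine (diamond_subset_ballZ (r := r) (by omega)).trans (subset_inter ?_ ?_) <;>
      exact ballZ_subset_ballZ (by push_cast; omega)

/-! ### Newly covered points of one step -/

theorem fLBDnat_large {k d : ℕ} (h : 2 * k + 1 ≤ d) :
    fLBDnat k d = 2 * (k : ℝ) ^ 2 + 2 * (k : ℝ) + 1 := by
  simp [fLBDnat, h]

theorem fLBDnat_even {k e : ℕ} (h : e ≤ k) :
    fLBDnat k (2 * e) = 2 * (e : ℝ) * (2 * k + 1 - e) := by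
  have h2 : ¬ Odd (2 * e) := by simp
  rw [fLBDnat, if_neg (by omega), if_neg h2]
  push_cast
  ring

/-- At `d = 2k + 1` the formula for odd `d` gives the constant value `2k² + 2k + 1`, so that it
holds for all odd `d ≤ 2k + 1`. -/
theorem fLBDnat_odd {k e : ℕ} (h : e ≤ k) :
    fLBDnat k (2 * e + 1) = (2 * (e : ℝ) + 1) * (2 * k + 1 - (2 * e + 1) / 2) + 1 / 2 := by
  rcases h.lt_or_eq with h1 | rfl
  · have h2 : Odd (2 * e + 1) := ⟨e, rfl⟩
    rw [fLBDnat, if_neg (by omega), if_pos h2]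
    push_cast
    ring
  · rw [fLBDnat_large le_rfl]
    ring

/-- Moving a ball by `l1` distance `d` covers at most `fLBDnat k d` new lattice points. -/
theorem card_new_le (k d : ℕ) (p q : ℤ × ℤ) (h : distZ p q = d) :
    (#(ballZ q k \ ballZ p k) : ℝ) ≤ fLBDnat k d := by
  have hb : (#(ballZ q k) : ℝ) ≤ (k + 1) * (k + 1) + k * k := by
    exact_mod_cast card_ballZ_le q k
  have hs : (#(ballZ q k \ ballZ p k) : ℝ) + #(ballZ q k ∩ ballZ p k) = #(ballZ q k) := by
    exact_mod_cast card_sdiff_add_card_inter _ _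
  by_cases hd : 2 * k + 1 ≤ d
  · rw [fLBDnat_large hd]
    have : (0 : ℝ) ≤ #(ballZ q k ∩ ballZ p k) := by positivity
    nlinarith
  rcases Nat.even_or_odd' d with ⟨e, rfl | rfl⟩
  · obtain ⟨r, rfl⟩ := Nat.exists_eq_add_of_le' (show e ≤ k by omega)
    have hi : ((r : ℝ) + 1) * (r + 1) + r * r ≤ #(ballZ q (r + e) ∩ ballZ p (r + e)) := by
      exact_mod_cast inter_even (r := r) (by rw [h]; push_cast; ring)
    rw [fLBDnat_even (by omega)]
    push_cast at *
    nlinarith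
  · obtain ⟨r, rfl⟩ := Nat.exists_eq_add_of_le' (show e + 1 ≤ k by omega)
    have hi : 2 * (((r : ℝ) + 1) * (r + 1)) ≤
        #(ballZ q (r + (e + 1)) ∩ ballZ p (r + (e + 1))) := by
      exact_mod_cast inter_odd (r := r) (by rw [h]; push_cast; ring)
    rw [fLBDnat_odd (by omega)]
    push_cast at *
    nlinarith

/-! ### Concavity of the bound -/

theorem fLBDnat_le_const (k d : ℕ) : fLBDnat k d ≤ 2 * (k : ℝ) ^ 2 + 2 * (k : ℝ) + 1 := by
  by_cases hd : 2 * k + 1 ≤ d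
  · rw [fLBDnat_large hd]
  rcases Nat.even_or_odd' d with ⟨e, rfl | rfl⟩
  · rw [fLBDnat_even (by omega)]
    nlinarith [sq_nonneg ((k : ℝ) - e), (by exact_mod_cast (by omega : e ≤ k) : (e : ℝ) ≤ k)]
  · rw [fLBDnat_odd (by omega)]
    nlinarith [sq_nonneg ((k : ℝ) - e)]

theorem mul_succ_self_nonneg (t : ℤ) : (0 : ℝ) ≤ (t : ℝ) * (t + 1) := by
  have : 0 ≤ t * (t + 1) := by
    rcases le_or_gt 0 t with h | h <;> nlinarith
  exact_mod_cast this

/-- Discrete concavity of `fLBDnat k`: the line through its values at `a` and `a + 1` is an upper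
bound at all natural numbers. -/
theorem fLBDnat_le_line (k a d : ℕ) (ha : a ≤ 2 * k) :
    fLBDnat k d ≤ fLBDnat k a + ((d : ℝ) - a) * (fLBDnat k (a + 1) - fLBDnat k a) := by
  -- For `d` beyond `2k + 1` the bound follows from the one at `2k + 1`, the slope being nonnegative.
  wlog hd : d ≤ 2 * k + 1 generalizing d
  · have h1 := this (2 * k + 1) le_rfl
    have h2 := fLBDnat_le_const k a
    rw [fLBDnat_large le_rfl] at h1
    rw [fLBDnat_large (by omega)]
    have h3 : (a : ℝ) ≤ 2 * k := by exact_mod_cast ha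
    have h4 : (2 * k + 1 : ℝ) ≤ d := by exact_mod_cast (by omega : 2 * k + 1 ≤ d)
    push_cast at h1
    have h5 : 0 ≤ fLBDnat k (a + 1) - fLBDnat k a := by
      by_contra! h
      nlinarith
    nlinarith
  rcases Nat.even_or_odd' a with ⟨b, rfl | rfl⟩ <;> rcases Nat.even_or_odd' d with ⟨e, rfl | rfl⟩
  · rw [fLBDnat_even (by omega), fLBDnat_even (by omega), fLBDnat_odd (by omega)]
    push_cast
    nlinarith [sq_nonneg ((e : ℝ) - b)]
  · rw [fLBDnat_odd (by omega), fLBDnat_even (by omega), fLBDnat_odd (by omega)]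
    have := mul_succ_self_nonneg (e - b)
    push_cast at *
    nlinarith
  · rw [show 2 * b + 1 + 1 = 2 * (b + 1) by ring, fLBDnat_even (by omega), fLBDnat_odd (by omega),
      fLBDnat_even (by omega)]
    push_cast
    nlinarith [sq_nonneg ((e : ℝ) - b - 1)]
  · rw [show 2 * b + 1 + 1 = 2 * (b + 1) by ring, fLBDnat_odd (by omega), fLBDnat_odd (by omega),
      fLBDnat_even (by omega)]
    have := mul_succ_self_nonneg (e - b - 1)
    push_cast at *
    nlinarith

/-- Jensen's inequality for `fLBD k` at natural numbers. -/
theorem sum_fLBDnat_le {ι : Type*} (k : ℕ) (s : Finset ι) (hs : s.Nonempty) (d : ι → ℕ) :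
    ∑ i ∈ s, fLBDnat k (d i) ≤ #s * fLBD k ((∑ i ∈ s, (d i : ℝ)) / #s) := by
  have hc : (0 : ℝ) < #s := by exact_mod_cast hs.card_pos
  set x : ℝ := (∑ i ∈ s, (d i : ℝ)) / #s with hx
  have hxs : ∑ i ∈ s, (d i : ℝ) = #s * x := by rw [mul_comm, hx, div_mul_cancel₀ _ hc.ne']
  have hx0 : 0 ≤ x := div_nonneg (sum_nonneg fun i _ => Nat.cast_nonneg _) hc.le
  rw [fLBD]
  split_ifs with h
  · rw [← nsmul_eq_mul]
    exact sum_le_card_nsmul _ _ _ fun i _ => fLBDnat_le_const k (d i)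
  · set a := ⌊x⌋.toNat
    have hfl : (a : ℤ) = ⌊x⌋ := Int.toNat_of_nonneg (Int.floor_nonneg.mpr hx0)
    have hflr : (⌊x⌋ : ℝ) = a := by exact_mod_cast congrArg (Int.cast (R := ℝ)) hfl.symm
    have hak : a ≤ 2 * k := by
      have h1 : (a : ℝ) < 2 * k + 1 := by
        rw [← hflr]
        exact (Int.floor_le x).trans_lt (not_le.mp h)
      have : a < 2 * k + 1 := by exact_mod_cast h1
      omega
    rw [hflr]
    calc ∑ i ∈ s, fLBDnat k (d i)
        ≤ ∑ i ∈ s, (fLBDnat k a + ((d i : ℝ) - a) * (fLBDnat k (a + 1) - fLBDnat k a)) :=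
          sum_le_sum fun i _ => fLBDnat_le_line k a (d i) hak
      _ = _ := by
        rw [sum_add_distrib, ← sum_mul, sum_sub_distrib, hxs, sum_const, sum_const,
          nsmul_eq_mul, nsmul_eq_mul]
        ring

/-! ### Covering by a path -/

theorem card_covered_le (k : ℕ) (F : ℕ → ℤ × ℤ) (T : ℕ) (hT : 1 ≤ T) :
    (#((Icc 1 T).biUnion fun i => ballZ (F i) k) : ℝ) ≤ 2 * (k : ℝ) ^ 2 + 2 * (k : ℝ) + 1 +
      ∑ i ∈ Ico 1 T, fLBDnat k (distZ (F i) (F (i + 1))).toNat := by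
  induction T, hT using Nat.le_induction with
  | base =>
    have : (#(ballZ (F 1) k) : ℝ) ≤ (k + 1) * (k + 1) + k * k := by
      exact_mod_cast card_ballZ_le (F 1) k
    simp only [Icc_self, singleton_biUnion, Ico_self, sum_empty]
    nlinarith
  | succ T hT ih =>
    rw [sum_Ico_succ_top hT]
    have h1 := card_new_le k (distZ (F T) (F (T + 1))).toNat (F T) (F (T + 1))
      (Int.toNat_of_nonneg (distZ_nonneg _ _)).symm
    have hsub : ((Icc 1 (T + 1)).biUnion fun i => ballZ (F i) k) ⊆
        ((Icc 1 T).biUnion fun i => ballZ (F i) k) ∪ (ballZ (F (T + 1)) k \ ballZ (F T) k) := by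
      intro z hz
      simp only [mem_biUnion, mem_Icc, mem_union, mem_sdiff] at hz ⊢
      obtain ⟨i, hi, hzi⟩ := hz
      by_cases hzT : z ∈ ballZ (F T) k
      · exact Or.inl ⟨T, ⟨hT, le_rfl⟩, hzT⟩
      · rcases hi.2.lt_or_eq with h | rfl
        · exact Or.inl ⟨i, ⟨hi.1, by omega⟩, hzi⟩
        · exact Or.inr ⟨hzi, hzT⟩
    have h2 : (#((Icc 1 (T + 1)).biUnion fun i => ballZ (F i) k) : ℝ) ≤
        #((Icc 1 T).biUnion fun i => ballZ (F i) k) + #(ballZ (F (T + 1)) k \ ballZ (F T) k) := by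
      exact_mod_cast (card_le_card hsub).trans (card_union_le _ _)
    linarith

theorem stmt_15 (m n k : ℕ) (hm : 0 < m) (hn : 0 < n) (hmn : n ≤ m) (hk : 0 < k)
    (T : ℕ) (hT : 2 ≤ T) (F : ℕ → ℤ × ℤ)
    (hcov : ∀ z : ℤ × ℤ, 0 ≤ z.1 → z.1 ≤ (n : ℤ) → 0 ≤ z.2 → z.2 ≤ (m : ℤ) →
      ∃ i ∈ Finset.Icc 1 T, distZ z (F i) ≤ (k : ℤ))
    (L : ℤ) (hL : L = ∑ i ∈ Finset.Ico 1 T, distZ (F i) (F (i + 1))) :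
    (T - 1 : ℝ) * fLBD k ((L : ℝ) / (T - 1 : ℝ)) ≥
      ((m : ℝ) + 1) * ((n : ℝ) + 1) - (2 * (k : ℝ) ^ 2 + 2 * (k : ℝ) + 1) := by
  have hgrid : (Icc (0 : ℤ) n ×ˢ Icc (0 : ℤ) m) ⊆ (Icc 1 T).biUnion fun i => ballZ (F i) k := by
    intro z hz
    simp only [mem_product, mem_Icc] at hz
    obtain ⟨i, hi, h⟩ := hcov z hz.1.1 hz.1.2 hz.2.1 hz.2.2
    exact mem_biUnion.mpr ⟨i, hi, mem_ballZ.mpr h⟩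
  have hcard : ((n : ℝ) + 1) * (m + 1) ≤ #((Icc 1 T).biUnion fun i => ballZ (F i) k) := by
    have := card_le_card hgrid
    rw [card_product, Int.card_Icc, Int.card_Icc] at this
    have h1 : ((n : ℤ) + 1 - 0).toNat = n + 1 := by omega
    have h2 : ((m : ℤ) + 1 - 0).toNat = m + 1 := by omega
    rw [h1, h2] at this
    exact_mod_cast this
  have hcov' := card_covered_le k F T (by omega)
  have hJ := sum_fLBDnat_le k (Ico 1 T) (nonempty_Ico.mpr (by omega))
    fun i => (distZ (F i) (F (i + 1))).toNat
  have hT1 : ((#(Ico 1 T) : ℕ) : ℝ) = T - 1 := by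
    rw [Nat.card_Ico, Nat.cast_sub (by omega), Nat.cast_one]
  have hLr : ∑ i ∈ Ico 1 T, (((distZ (F i) (F (i + 1))).toNat : ℕ) : ℝ) = L := by
    rw [hL, Int.cast_sum]
    refine sum_congr rfl fun i _ => ?_
    exact_mod_cast congrArg (Int.cast (R := ℝ)) (Int.toNat_of_nonneg (distZ_nonneg (F i) (F (i + 1))))
  rw [hT1, hLr] at hJ
  linarith
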